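/- arXiv:1510.00974 — 2 statements merged into one kernel-verified Lean document; each statement's English description precedes it below -/
import Mathlib

section
/- Let φ be a lower semicontinuous trace on a C*-algebra A and let e be a projection in A such that φ takes finite values on (eAe)₊. Then for every positive element x in the closed two-sided ideal AeA generated by e, one has φ(x) = sup{ φ(y) : y ∈ (eAe)₊, y ≼ x }. -/
open scoped ENNReal NNReal

/-- A `[0,∞]`-valued trace on a C*-algebra: positively homogeneous and additive on the
positive cone, and satisfying `φ (x* x) = φ (x x*)` for all `x`. -/
structure IsTrace {A : Type*} [NonUnitalCStarAlgebra A] [PartialOrder A] [StarOrderedRing A]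
    (φ : A → ℝ≥0∞) : Prop where
  smul : ∀ x : A, 0 ≤ x → ∀ α : ℝ≥0, φ ((α : ℝ) • x) = (α : ℝ≥0∞) * φ x
  add : ∀ x y : A, 0 ≤ x → 0 ≤ y → φ (x + y) = φ x + φ y
  tracial : ∀ x : A, φ (star x * x) = φ (x * star x)

/-- A trace is lower semicontinuous if for each finite `α`, the set of positive elements
with `φ x ≤ α` is closed. -/
def IsLSC {A : Type*} [NonUnitalCStarAlgebra A] [PartialOrder A] [StarOrderedRing A]
    (φ : A → ℝ≥0∞) : Prop :=
  ∀ α : ℝ≥0, IsClosed {x : A | 0 ≤ x ∧ φ x ≤ (α : ℝ≥0∞)}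

/-- `y ≼ x`: there is `x₁` with `0 ≤ x₁ ≤ x` and `y ≈ x₁`, i.e. there is a finite family
`z i` with `y = ∑ star (z i) * z i` and `x₁ = ∑ z i * star (z i)`. -/
def Subequivalent {A : Type*} [NonUnitalCStarAlgebra A] [PartialOrder A] [StarOrderedRing A]
    (y x : A) : Prop :=
  ∃ x₁ : A, 0 ≤ x₁ ∧ x₁ ≤ x ∧ ∃ (n : ℕ) (z : Fin n → A),
    y = ∑ i, star (z i) * z i ∧ x₁ = ∑ i, z i * star (z i)

namespace IsTrace

variable {A : Type*} [NonUnitalCStarAlgebra A] [PartialOrder A] [StarOrderedRing A]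
  {φ : A → ℝ≥0∞}

lemma map_zero (hφ : IsTrace φ) : φ 0 = 0 := by
  simpa using hφ.smul 0 le_rfl 0

lemma mono (hφ : IsTrace φ) {x y : A} (hx : 0 ≤ x) (hxy : x ≤ y) : φ x ≤ φ y := by
  have h := hφ.add x (y - x) hx (sub_nonneg.mpr hxy)
  rw [add_sub_cancel] at h
  exact h ▸ le_self_add

lemma map_sum (hφ : IsTrace φ) {ι : Type*} (s : Finset ι) (f : ι → A) (hf : ∀ i, 0 ≤ f i) :
    φ (∑ i ∈ s, f i) = ∑ i ∈ s, φ (f i) := by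
  classical
  induction s using Finset.induction_on with
  | empty => simpa using hφ.map_zero
  | insert i s hi ih =>
    rw [Finset.sum_insert hi, Finset.sum_insert hi,
      hφ.add _ _ (hf i) (Finset.sum_nonneg fun j _ ↦ hf j), ih]

lemma map_sum_star_mul_self (hφ : IsTrace φ) {ι : Type*} [Fintype ι] (z : ι → A) :
    φ (∑ i, star (z i) * z i) = φ (∑ i, z i * star (z i)) := by
  rw [hφ.map_sum _ _ fun i ↦ star_mul_self_nonneg (z i),
    hφ.map_sum _ _ fun i ↦ mul_star_self_nonneg (z i)]
  exact Finset.sum_congr rfl fun i _ ↦ hφ.tracial (z i)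

lemma le_of_subequivalent (hφ : IsTrace φ) {x y : A} (h : Subequivalent y x) : φ y ≤ φ x := by
  obtain ⟨x₁, hx₁, hx₁x, n, z, rfl, rfl⟩ := h
  rw [hφ.map_sum_star_mul_self]
  exact hφ.mono hx₁ hx₁x

end IsTrace

/-- The two-sided ideal generated by an idempotent `e` consists of finite sums of `a * e * c`. -/
lemma TwoSidedIdeal.exists_eq_sum_of_mem_span_singleton {R : Type*} [NonUnitalRing R] {e w : R}
    (he : e * e = e) (hw : w ∈ TwoSidedIdeal.span {e}) :
    ∃ (n : ℕ) (a c : Fin n → R), w = ∑ i, a i * e * c i := by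
  rw [TwoSidedIdeal.mem_span_iff_mem_addSubgroup_closure_nonunital] at hw
  have single (a c : R) : ∃ (n : ℕ) (a' c' : Fin n → R), a * e * c = ∑ i, a' i * e * c' i :=
    ⟨1, fun _ ↦ a, fun _ ↦ c, by simp⟩
  induction hw using AddSubgroup.closure_induction with
  | mem w hw =>
    rcases hw with ((hw | ⟨y, hy, c, -, rfl⟩) | ⟨a, -, y, hy, rfl⟩) |
      ⟨_, ⟨a, -, y, hy, rfl⟩, c, -, rfl⟩
    · obtain rfl : w = e := hw
      simpa only [he] using single w w
    all_goals obtain rfl : y = e := hy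
    · simpa only [he] using single y c
    · simpa only [mul_assoc, he] using single a y
    · exact single a c
  | zero => exact ⟨0, 0, 0, by simp⟩
  | add w₁ w₂ _ _ h₁ h₂ =>
    obtain ⟨n₁, a₁, c₁, rfl⟩ := h₁
    obtain ⟨n₂, a₂, c₂, rfl⟩ := h₂
    exact ⟨n₁ + n₂, Fin.append a₁ a₂, Fin.append c₁ c₂, by simp [Fin.sum_univ_add]⟩
  | neg w _ h =>
    obtain ⟨n, a, c, rfl⟩ := h
    exact ⟨n, -a, c, by simp⟩

/-- For `k ≥ 0` in a unital C⋆-algebra, `v = (1 + k) ^ (-1/2)` satisfies `v * v + v * k * v = 1`. -/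
lemma exists_isSelfAdjoint_mul_add_mul_eq_one {B : Type*} [CStarAlgebra B] [PartialOrder B]
    [StarOrderedRing B] {k : B} (hk : 0 ≤ k) :
    ∃ v : B, IsSelfAdjoint v ∧ v * v + v * k * v = 1 := by
  have hpos : ∀ t ∈ spectrum ℝ k, 0 < 1 + t := fun t ht ↦ by
    linarith [spectrum_nonneg_of_nonneg hk ht]
  have hc : ContinuousOn (fun t : ℝ ↦ (√(1 + t))⁻¹) (spectrum ℝ k) :=
    ContinuousOn.inv₀ (by fun_prop) fun t ht ↦ (Real.sqrt_pos.mpr (hpos t ht)).ne'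
  have hsa : IsSelfAdjoint k := .of_nonneg hk
  refine ⟨cfc (fun t : ℝ ↦ (√(1 + t))⁻¹) k, cfc_predicate _ _, ?_⟩
  nth_rw 4 [← cfc_id ℝ k]
  rw [← cfc_mul _ _ k hc hc, ← cfc_mul _ _ k hc (by fun_prop), ← cfc_mul _ _ k (by fun_prop) hc,
    ← cfc_add _ _ _ (by fun_prop) (by fun_prop), ← cfc_one ℝ k]
  refine cfc_congr fun t ht ↦ ?_
  have h₁ := Real.sq_sqrt (hpos t ht).le
  have h₂ := (Real.sqrt_pos.mpr (hpos t ht)).ne'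
  simp only [id_eq, Pi.one_apply]
  field_simp
  linarith

/-- For a finite family `p`, there is a self-adjoint contraction `v` with
`v * v = 1 - ∑ i, (v * p i) * star (v * p i)`; in particular each `v * p i` is a contraction. -/
lemma exists_isSelfAdjoint_mul_add_sum_eq_one {B : Type*} [CStarAlgebra B] [PartialOrder B]
    [StarOrderedRing B] {n : ℕ} (p : Fin n → B) :
    ∃ v : B, IsSelfAdjoint v ∧ v * v + ∑ i, v * p i * star (v * p i) = 1 ∧
      ‖v‖ ≤ 1 ∧ ∀ i, ‖v * p i‖ ≤ 1 := by
  obtain ⟨v, hv, h⟩ := exists_isSelfAdjoint_mul_add_mul_eq_one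
    (Finset.sum_nonneg fun i (_ : i ∈ Finset.univ) ↦ mul_star_self_nonneg (p i))
  have h' : v * v + ∑ i, v * p i * star (v * p i) = 1 := by
    rw [← h, Finset.mul_sum, Finset.sum_mul]
    simp [hv.star_eq, mul_assoc]
  have norm_le {y : B} (hy : y * star y ≤ 1) : ‖y‖ ≤ 1 := by
    have := (CStarAlgebra.norm_le_one_iff_of_nonneg _ (mul_star_self_nonneg y)).mpr hy
    rw [CStarRing.norm_self_mul_star] at this
    nlinarith [norm_nonneg y]
  have hvv : 0 ≤ v * v := by simpa [hv.star_eq] using mul_star_self_nonneg v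
  have hnn i : 0 ≤ v * p i * star (v * p i) := mul_star_self_nonneg _
  refine ⟨v, hv, h', norm_le ?_, fun i ↦ norm_le ?_⟩
  · rw [hv.star_eq, ← h']
    exact le_add_of_nonneg_right (Finset.sum_nonneg fun i _ ↦ hnn i)
  · rw [← h']
    exact (Finset.single_le_sum (fun j _ ↦ hnn j) (Finset.mem_univ i)).trans
      (le_add_of_nonneg_left hvv)

section Approximation

open scoped CStarAlgebra

variable {A : Type*} [NonUnitalCStarAlgebra A] [PartialOrder A] [StarOrderedRing A]

lemma Unitization.exists_inr_eq_mul_inr {R S : Type*} [CommSemiring R] [NonUnitalSemiring S]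
    [Module R S] (v : Unitization R S) (a : S) : ∃ b : S, (b : Unitization R S) = v * a :=
  ⟨(v * a).snd, by ext <;> simp⟩

lemma Unitization.inr_finset_sum {R S ι : Type*} [Semiring R] [AddCommMonoid S] [Module R S]
    (s : Finset ι) (f : ι → S) :
    ((∑ i ∈ s, f i : S) : Unitization R S) = ∑ i ∈ s, (f i : Unitization R S) :=
  map_sum (Unitization.inrHom R R S) f s

/-- Given `x ≥ 0` and a finite family `p`, the elements `z i = √x * v * p i`, where
`v = (1 + ∑ i, p i * star (p i)) ^ (-1/2)`, satisfy `∑ i, z i * star (z i) ≤ x`, with an error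
controlled by `‖v * x‖`. -/
lemma exists_sum_mul_star_le {n : ℕ} (p : Fin n → A) {x : A} (hx : 0 ≤ x) :
    ∃ (v : Unitization ℂ A) (z : Fin n → A), ‖v‖ ≤ 1 ∧ (∀ i, ‖v * p i‖ ≤ 1) ∧
      (∀ i (e : A), p i * e = p i → z i * e = z i) ∧
      ∑ i, z i * star (z i) ≤ x ∧
      ‖x - ∑ i, z i * star (z i)‖ ≤ ‖v * x‖ := by
  obtain ⟨v, hv, hsum, hv1, hvp⟩ :=
    exists_isSelfAdjoint_mul_add_sum_eq_one fun i ↦ (p i : Unitization ℂ A)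
  choose b hb using fun i ↦ Unitization.exists_inr_eq_mul_inr v (p i)
  set r := CFC.sqrt x
  have hr : star r = r := (CFC.sqrt_nonneg x).star_eq
  have hrr : r * r = x := CFC.sqrt_mul_sqrt_self x
  obtain ⟨d, hd⟩ := Unitization.exists_inr_eq_mul_inr v r
  have hxd : x - ∑ i, r * b i * star (r * b i) = star d * d := by
    rw [sub_eq_iff_eq_add]
    apply Unitization.inr_injective (R := ℂ)
    have hinr : ((∑ i, r * b i * star (r * b i) : A) : Unitization ℂ A) =
        ∑ i, r * (v * p i * star (v * p i)) * r := by
      rw [Unitization.inr_finset_sum]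
      refine Finset.sum_congr rfl fun i _ ↦ ?_
      rw [← hb, star_mul, hr, Unitization.inr_mul, Unitization.inr_mul, Unitization.inr_mul,
        Unitization.inr_star]
      noncomm_ring
    rw [Unitization.inr_add, hinr, ← Finset.sum_mul, ← Finset.mul_sum, Unitization.inr_mul,
      Unitization.inr_star, hd, star_mul, hv.star_eq, ← Unitization.inr_star, hr]
    calc (x : Unitization ℂ A) = r * 1 * r := by rw [mul_one, ← Unitization.inr_mul, hrr]
      _ = _ := by rw [← hsum]; noncomm_ring
  refine ⟨v, fun i ↦ r * b i, hv1, hvp, fun i e hpe ↦ ?_, ?_, ?_⟩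
  · rw [mul_assoc]
    congr 1
    apply Unitization.inr_injective (R := ℂ)
    rw [Unitization.inr_mul, hb, mul_assoc, ← Unitization.inr_mul, hpe]
  · rw [← sub_nonneg, hxd]
    exact star_mul_self_nonneg d
  · rw [hxd, CStarRing.norm_star_mul_self, ← CStarRing.norm_self_mul_star,
      ← Unitization.norm_inr (𝕜 := ℂ)]
    have : ((d * star d : A) : Unitization ℂ A) = v * x * v := by
      rw [Unitization.inr_mul, Unitization.inr_star, hd, star_mul, hv.star_eq,
        ← Unitization.inr_star, hr, ← hrr, Unitization.inr_mul]
      noncomm_ring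
    rw [this]
    exact (norm_mul_le _ _).trans (mul_le_of_le_one_right (norm_nonneg _) hv1)

/-- A positive element of the closed ideal generated by a projection `e` is a norm limit of
elements `∑ i, z i * star (z i) ≤ x` with `z i ∈ A * e`. -/
lemma exists_sum_mul_star_dist_lt {e x : A} (he : e * e = e) (hx : 0 ≤ x)
    (hxI : x ∈ closure (TwoSidedIdeal.span {e} : Set A)) {ε : ℝ} (hε : 0 < ε) :
    ∃ (n : ℕ) (z : Fin n → A), (∀ i, z i * e = z i) ∧ ∑ i, z i * star (z i) ≤ x ∧
      dist x (∑ i, z i * star (z i)) < ε := by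
  obtain ⟨w, hw, hxw⟩ := Metric.mem_closure_iff.mp hxI (ε / 2) (half_pos hε)
  obtain ⟨n, a, c, rfl⟩ := TwoSidedIdeal.exists_eq_sum_of_mem_span_singleton he hw
  obtain ⟨N, hN⟩ := exists_nat_gt ((∑ i, ‖c i‖) / (ε / 2))
  have hN0 : (0 : ℝ) < N := lt_of_le_of_lt (by positivity) hN
  obtain ⟨v, z, hv, hvp, hz, hzx, hzd⟩ :=
    exists_sum_mul_star_le (fun i ↦ (N : ℝ) • (a i * e)) hx
  refine ⟨n, z, fun i ↦ hz i e (by rw [smul_mul_assoc, mul_assoc, he]), hzx, ?_⟩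
  have hterm i : ‖v * ((a i * e * c i : A) : Unitization ℂ A)‖ ≤ ‖c i‖ / N := by
    rw [le_div_iff₀ hN0]
    calc _ = ‖v * (((N : ℝ) • (a i * e) : A) : Unitization ℂ A) * (c i : Unitization ℂ A)‖ := by
          rw [Unitization.inr_smul, mul_smul_comm, smul_mul_assoc, norm_smul, mul_assoc v,
            ← Unitization.inr_mul, Real.norm_of_nonneg hN0.le, mul_comm]
      _ ≤ _ := (norm_mul_le _ _).trans <| by
          rw [Unitization.norm_inr]
          exact mul_le_of_le_one_left (norm_nonneg _) (hvp i)
  rw [dist_eq_norm] at hxw ⊢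
  refine hzd.trans_lt ?_
  set w := ∑ i, a i * e * c i with hw_def
  have h₁ : ‖v * ((x - w : A) : Unitization ℂ A)‖ < ε / 2 :=
    ((norm_mul_le _ _).trans (mul_le_of_le_one_left (norm_nonneg _) hv)).trans_lt
      (by rwa [Unitization.norm_inr])
  have h₂ : ‖v * (w : Unitization ℂ A)‖ ≤ ε / 2 := by
    have hinr : (w : Unitization ℂ A) = ∑ i, ((a i * e * c i : A) : Unitization ℂ A) :=
      Unitization.inr_finset_sum ..
    rw [hinr, Finset.mul_sum]
    refine (norm_sum_le_of_le _ fun i _ ↦ hterm i).trans ?_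
    rw [← Finset.sum_div, div_le_iff₀ hN0]
    rw [div_lt_iff₀ (half_pos hε)] at hN
    linarith
  have hsplit : v * (x : Unitization ℂ A) = v * ((x - w : A) : Unitization ℂ A) + v * w := by
    rw [← mul_add, ← Unitization.inr_add, sub_add_cancel]
  rw [hsplit]
  exact (norm_add_le _ _).trans_lt (by linarith)

end Approximation

/-- Let `φ` be a lower semicontinuous trace on a C*-algebra `A` and `e` a projection such
that `φ` is finite on `(eAe)₊`. Then for every positive `x` in the closed two-sided ideal
`AeA` generated by `e`, `φ x = sup { φ y : y ∈ (eAe)₊, y ≼ x }`. -/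
theorem trace_eq_sSup_on_ideal {A : Type*} [NonUnitalCStarAlgebra A]
    [PartialOrder A] [StarOrderedRing A]
    (φ : A → ℝ≥0∞) (hφ : IsTrace φ) (hφl : IsLSC φ)
    (e : A) (he₁ : IsSelfAdjoint e) (he₂ : e * e = e)
    (hfin : ∀ x : A, 0 ≤ x → (∃ a : A, x = e * a * e) → φ x < ∞)
    (x : A) (hx : 0 ≤ x) (hxI : x ∈ closure (TwoSidedIdeal.span {e} : Set A)) :
    φ x = sSup (φ '' {y : A | 0 ≤ y ∧ (∃ a : A, y = e * a * e) ∧ Subequivalent y x}) := by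
  refine le_antisymm ?_ (sSup_le ?_)
  · obtain ⟨M, hM⟩ : ∃ M, M = sSup (φ '' {y : A | 0 ≤ y ∧ (∃ a : A, y = e * a * e) ∧ Subequivalent y x}) := ⟨_, rfl⟩
    rw [← hM]
    by_cases hMtop : M = ∞
    · exact hMtop ▸ le_top
    lift M to ℝ≥0 using hMtop
    refine ((hφl M).closure_subset (Metric.mem_closure_iff.mpr fun ε hε ↦ ?_)).2
    obtain ⟨n, z, hze, hzx, hd⟩ := exists_sum_mul_star_dist_lt he₂ hx hxI hε
    have hpos : 0 ≤ ∑ i, z i * star (z i) :=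
      Finset.sum_nonneg fun i _ ↦ mul_star_self_nonneg (z i)
    refine ⟨_, ⟨hpos, ?_⟩, hd⟩
    rw [← hφ.map_sum_star_mul_self, hM]
    refine le_sSup ⟨_, ⟨Finset.sum_nonneg fun i _ ↦ star_mul_self_nonneg (z i),
      ⟨∑ i, star (z i) * z i, ?_⟩, ⟨_, hpos, hzx, n, z, rfl, rfl⟩⟩, rfl⟩
    rw [Finset.mul_sum, Finset.sum_mul]
    refine Finset.sum_congr rfl fun i _ ↦ ?_
    rw [← mul_assoc, mul_assoc _ _ e, hze]
    congr 1
    nth_rw 1 [← hze i]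
    rw [star_mul, he₁.star_eq]
  · rintro _ ⟨y, ⟨-, -, hyx⟩, rfl⟩
    exact hφ.le_of_subequivalent hyx
end

section
/- Let A be a C*-algebra with the ideal property. Suppose that for every projection e ∈ A there is given a lower semicontinuous trace φ_e on A such that for any two projections e₁, e₂ ∈ A one has φ_{e₁}(x) = φ_{e₂}(x) for all positive x ∈ (Ae₁A) ∩ (Ae₂A). Then there exists a lower semicontinuous trace φ on A such that φ(x) = φ_e(x) for every projection e ∈ A and every positive x ∈ AeA. -/
open scoped ENNReal NNReal

/-- A C*-algebra has the ideal property if every closed two-sided ideal is generated, as a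
closed two-sided ideal, by the projections it contains. -/
def IdealProperty (A : Type*) [NonUnitalCStarAlgebra A] [PartialOrder A]
    [StarOrderedRing A] : Prop :=
  ∀ I : TwoSidedIdeal A, IsClosed (I : Set A) →
    (I : Set A) =
      closure (TwoSidedIdeal.span {p : A | p ∈ I ∧ IsSelfAdjoint p ∧ p * p = p} : Set A)

section Glueing

open Filter Topology

variable {A : Type*} [NonUnitalCStarAlgebra A] [PartialOrder A] [StarOrderedRing A]

/-- A continuous approximation `f` of the inverse square root on `[0, ∞)`. -/
lemma exists_continuous_approx_inv_sqrt {δ : ℝ} (hδ : 0 < δ) :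
    ∃ f : ℝ → ℝ, Continuous f ∧ f 0 = 0 ∧ ∀ t, 0 ≤ t →
      0 ≤ f t * t * f t ∧ f t * t * f t ≤ 1 ∧ t * (1 - f t * t * f t) ≤ 2 * δ := by
  refine ⟨fun t ↦ √t / (|t| + δ), ?_, by simp, fun t ht ↦ ?_⟩
  · exact Continuous.div (by fun_prop) (by fun_prop) fun t ↦ by positivity
  · have h : √t / (|t| + δ) * t * (√t / (|t| + δ)) = (t / (t + δ)) ^ 2 := by
      rw [abs_of_nonneg ht, div_pow, div_mul_eq_mul_div, div_mul_div_comm]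
      congr 1
      · nlinarith [Real.mul_self_sqrt ht]
      · ring
    refine ⟨by positivity, ?_, ?_⟩
    · rw [h]
      exact pow_le_one₀ (by positivity) ((div_le_one (by positivity)).2 (by linarith))
    · have hb : t * (1 - (t / (t + δ)) ^ 2) = t * (δ * (2 * t + δ)) / (t + δ) ^ 2 := by
        field_simp
        ring
      rw [h, hb, div_le_iff₀ (by positivity)]
      nlinarith [mul_nonneg ht hδ.le, mul_nonneg (mul_nonneg ht hδ.le) hδ.le, pow_pos hδ 3]

/-- Compressing `s` by the formal element `1 - g(s)` is compatible with the functional calculus. -/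
lemma compress_one_sub_cfcₙ {A : Type*} [NonUnitalCStarAlgebra A] {s : A}
    (hs : IsSelfAdjoint s) {g : ℝ → ℝ} (hg : Continuous g)
    (hg0 : g 0 = 0) :
    s - cfcₙ g s * s - s * cfcₙ g s + cfcₙ g s * s * cfcₙ g s =
      cfcₙ (fun t ↦ t - g t * t - t * g t + g t * t * g t) s := by
  have h1 : Continuous fun t ↦ g t * t := by fun_prop
  have h2 : Continuous fun t ↦ t * g t := by fun_prop
  rw [cfcₙ_add (fun t ↦ t - g t * t - t * g t) (fun t ↦ g t * t * g t) s
      (by fun_prop) (by simp) (by fun_prop) (by simp),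
    cfcₙ_sub (fun t ↦ t - g t * t) (fun t ↦ t * g t) s
      (by fun_prop) (by simp) (by fun_prop) (by simp),
    cfcₙ_sub (fun t ↦ t) (fun t ↦ g t * t) s
      (by fun_prop) (by simp) (by fun_prop) (by simp),
    cfcₙ_mul (fun t ↦ g t * t) g s (by fun_prop) (by simp) (by fun_prop) hg0,
    cfcₙ_mul g (fun t ↦ t) s (by fun_prop) hg0 (by fun_prop) (by simp),
    cfcₙ_mul (fun t ↦ t) g s (by fun_prop) (by simp) (by fun_prop) hg0,
    cfcₙ_id' ℝ s]

/-- For positive `s` there is an approximate inverse square root `r` of `s`, in the sense that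
`r * s * r` is a contraction which almost acts as a unit on `s`. -/
lemma exists_approx_inv_sqrt {s : A} (hs : 0 ≤ s) {δ : ℝ} (hδ : 0 < δ) :
    ∃ r : A, IsSelfAdjoint r ∧ ‖r * s * r‖ ≤ 1 ∧
      ‖s - r * s * r * s - s * (r * s * r) + r * s * r * s * (r * s * r)‖ ≤ 2 * δ := by
  obtain ⟨f, hf, hf0, hft⟩ := exists_continuous_approx_inv_sqrt hδ
  have hsa : IsSelfAdjoint s := .of_nonneg hs
  have hgs : cfcₙ f s * s * cfcₙ f s = cfcₙ (fun t ↦ f t * t * f t) s := by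
    rw [cfcₙ_mul (fun t ↦ f t * t) f s (by fun_prop) (by simp) (by fun_prop) hf0,
      cfcₙ_mul f (fun t ↦ t) s (by fun_prop) hf0 (by fun_prop) (by simp), cfcₙ_id' ℝ s]
  refine ⟨cfcₙ f s, cfcₙ_predicate f s, ?_, ?_⟩
  · rw [hgs]
    refine norm_cfcₙ_le fun t ht ↦ ?_
    obtain ⟨h0, h1, -⟩ := hft t (quasispectrum_nonneg_of_nonneg s hs t ht)
    rwa [Real.norm_of_nonneg h0]
  · rw [hgs, compress_one_sub_cfcₙ hsa (by fun_prop) (by simp)]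
    refine norm_cfcₙ_le fun t ht ↦ ?_
    have ht := quasispectrum_nonneg_of_nonneg s hs t ht
    obtain ⟨h0, h1, h2⟩ := hft t ht
    generalize f t * t * f t = c at h0 h1 h2 ⊢
    have hc : 0 ≤ 1 - c := sub_nonneg.2 h1
    have hexp : t - c * t - t * c + c * t * c = t * (1 - c) * (1 - c) := by ring
    rw [hexp, Real.norm_of_nonneg (by positivity)]
    exact (mul_le_of_le_one_right (by positivity) (by linarith)).trans h2

/-- If `s - u * u` is positive, then `u` almost absorbs every self-adjoint element that `s` almost
absorbs. -/
lemma norm_sub_mul_sq_le {s u g : A} (hu : IsSelfAdjoint u) (hg : IsSelfAdjoint g)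
    (hus : u * u ≤ s) :
    ‖u - u * g‖ ^ 2 ≤ ‖s - g * s - s * g + g * s * g‖ := by
  have hconj : star (u - u * g) * (u - u * g) =
      u * u - g * (u * u) - u * u * g + g * (u * u) * g := by
    rw [star_sub, star_mul, hu.star_eq, hg.star_eq]
    noncomm_ring
  rw [sq, ← CStarRing.norm_star_mul_self]
  refine CStarAlgebra.norm_le_norm_of_nonneg_of_le (star_mul_self_nonneg _) ?_
  obtain ⟨b, hb⟩ := CStarAlgebra.nonneg_iff_eq_star_mul_self.1 (sub_nonneg.2 hus)
  have hpos := star_mul_self_nonneg (b - b * g)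
  have : star (b - b * g) * (b - b * g) =
      (s - u * u) - g * (s - u * u) - (s - u * u) * g + g * (s - u * u) * g := by
    rw [hb, star_sub, star_mul, hg.star_eq]
    noncomm_ring
  rw [this] at hpos
  rw [hconj, ← sub_nonneg]
  refine hpos.trans_eq ?_
  noncomm_ring

/-- For positive `s` there is a sequence `r` such that `r n * s * r n` is an approximate unit of
contractions for all square roots of positive elements below `s`. -/
lemma exists_seq_tendsto_mul {s : A} (hs : 0 ≤ s) :
    ∃ r : ℕ → A, (∀ n, IsSelfAdjoint (r n)) ∧ (∀ n, ‖r n * s * r n‖ ≤ 1) ∧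
      ∀ u : A, IsSelfAdjoint u → u * u ≤ s →
        Tendsto (fun n ↦ u * (r n * s * r n)) atTop (𝓝 u) := by
  choose r hr hr1 hrs using fun n : ℕ ↦
    exists_approx_inv_sqrt hs (δ := 1 / ((n : ℝ) + 1)) (by positivity)
  refine ⟨r, hr, hr1, fun u hu hus ↦ ?_⟩
  have hg : ∀ n, IsSelfAdjoint (r n * s * r n) := fun n ↦ by
    simpa [(hr n).star_eq] using (IsSelfAdjoint.of_nonneg hs).conjugate (r n)
  rw [tendsto_iff_norm_sub_tendsto_zero]
  have hsq : Tendsto (fun n ↦ ‖u * (r n * s * r n) - u‖ ^ 2) atTop (𝓝 0) := by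
    have hlim : Tendsto (fun n : ℕ ↦ 2 * (1 / ((n : ℝ) + 1))) atTop (𝓝 0) := by
      simpa using (tendsto_one_div_add_atTop_nhds_zero_nat (𝕜 := ℝ)).const_mul 2
    refine squeeze_zero (fun n ↦ by positivity) (fun n ↦ ?_) hlim
    rw [norm_sub_rev]
    exact (norm_sub_mul_sq_le hu (hg n) hus).trans (hrs n)
  simpa [Real.sqrt_sq (norm_nonneg _)] using hsq.sqrt

/-- Closures of two-sided ideals of a C⋆-algebra are hereditary. -/
lemma mem_closure_of_le {I : TwoSidedIdeal A} {x s : A} (hx : 0 ≤ x) (hxs : x ≤ s)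
    (hs : s ∈ closure (I : Set A)) : x ∈ closure (I : Set A) := by
  have hmul : ∀ a b c : A, b ∈ closure (I : Set A) → a * b * c ∈ closure (I : Set A) :=
    fun a b c hb ↦ map_mem_closure (f := fun b ↦ a * b * c) (by fun_prop) hb
      fun y hy ↦ I.mul_mem_right _ _ (I.mul_mem_left _ _ hy)
  obtain ⟨r, -, -, hr⟩ := exists_seq_tendsto_mul (hx.trans hxs)
  have hsq := CFC.sqrt_mul_sqrt_self x hx
  have hlim := (hr (CFC.sqrt x) (.of_nonneg (CFC.sqrt_nonneg x)) (hsq.le.trans hxs)).mul_const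
    (CFC.sqrt x)
  rw [hsq] at hlim
  refine isClosed_closure.mem_of_tendsto hlim (.of_forall fun n ↦ ?_)
  convert hmul (CFC.sqrt x * r n) s (r n * CFC.sqrt x) hs using 1
  noncomm_ring

lemma IsTrace.zero {φ : A → ℝ≥0∞} (hφ : IsTrace φ) : φ 0 = 0 := by
  simpa using hφ.smul 0 le_rfl 0

lemma IsTrace.mono_s7 {φ : A → ℝ≥0∞} (hφ : IsTrace φ) {x y : A} (hx : 0 ≤ x) (hxy : x ≤ y) :
    φ x ≤ φ y := by
  have h := hφ.add x (y - x) hx (sub_nonneg.2 hxy)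
  rw [add_sub_cancel] at h
  exact h ▸ le_self_add

lemma IsTrace.sum {φ : A → ℝ≥0∞} (hφ : IsTrace φ) {ι : Type*} (s : Finset ι) {a : ι → A}
    (ha : ∀ i, 0 ≤ a i) : φ (∑ i ∈ s, a i) = ∑ i ∈ s, φ (a i) := by
  classical
  induction s using Finset.induction_on with
  | empty => simpa using hφ.zero
  | insert i s hi ih =>
    rw [Finset.sum_insert hi, Finset.sum_insert hi,
      hφ.add _ _ (ha i) (Finset.sum_nonneg fun j _ ↦ ha j), ih]

open Classical in
lemma IsLSC.lowerSemicontinuous {φ : A → ℝ≥0∞} (hφ : IsLSC φ) :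
    LowerSemicontinuous fun x ↦ if 0 ≤ x then φ x else ⊤ := by
  rw [lowerSemicontinuous_iff_isClosed_preimage]
  intro c
  induction c with
  | top => simp
  | coe c =>
    convert hφ c using 1
    ext x
    by_cases hx : 0 ≤ x <;> simp [hx]

/-- A finite sum of lower semicontinuous functions on the positive cone is sequentially lower
semicontinuous. -/
lemma IsLSC.sum_le_of_tendsto {ι : Type*} [Fintype ι] {φ : ι → A → ℝ≥0∞}
    (hφ : ∀ i, IsLSC (φ i)) {b : ℕ → ι → A} {a : ι → A} (hb : ∀ n i, 0 ≤ b n i)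
    (hlim : ∀ i, Tendsto (fun n ↦ b n i) atTop (𝓝 (a i))) {c : ℝ≥0∞}
    (hc : ∀ n, ∑ i, φ i (b n i) ≤ c) : ∑ i, φ i (a i) ≤ c := by
  classical
  have hF : LowerSemicontinuous fun y : ι → A ↦
      ∑ i, if 0 ≤ y i then φ i (y i) else ⊤ :=
    lowerSemicontinuous_sum fun i _ ↦
      (hφ i).lowerSemicontinuous.comp (continuous_apply i)
  have ha : ∀ i, 0 ≤ a i := fun i ↦ ge_of_tendsto' (hlim i) fun n ↦ hb n i
  have hmem := (hF.isClosed_preimage c).mem_of_tendsto (tendsto_pi_nhds.2 hlim)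
    (.of_forall fun n ↦ by simpa [hb] using hc n)
  simpa [ha] using hmem

/-- The family `a` of positive elements is subordinate to the family `e` of projections: `a i`
belongs to the closed ideal generated by `e i`. -/
structure IsSubordinate {ι : Type*} (e a : ι → A) : Prop where
  isSelfAdjoint : ∀ i, IsSelfAdjoint (e i)
  mul_self : ∀ i, e i * e i = e i
  nonneg : ∀ i, 0 ≤ a i
  mem : ∀ i, a i ∈ closure (TwoSidedIdeal.span {e i} : Set A)

/-- The glueing of a family `φ` of traces indexed by projections: the supremum of
`∑ i, φ (e i) (a i)` over all finite families of positive elements `a i` in the closed ideals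
generated by projections `e i` with `∑ i, a i ≤ x`. -/
noncomputable def gluedTrace (φ : A → A → ℝ≥0∞) (x : A) : ℝ≥0∞ :=
  sSup {v | ∃ (ι : Type) (_ : Fintype ι) (e a : ι → A), IsSubordinate e a ∧ ∑ i, a i ≤ x ∧
    v = ∑ i, φ (e i) (a i)}

lemma IsSubordinate.sum_le_gluedTrace {A : Type*} [NonUnitalCStarAlgebra A] [PartialOrder A]
    {φ : A → A → ℝ≥0∞} {ι : Type} [Fintype ι] {e a : ι → A}
    (h : IsSubordinate e a) {x : A} (hx : ∑ i, a i ≤ x) :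
    ∑ i, φ (e i) (a i) ≤ gluedTrace φ x :=
  le_sSup ⟨ι, _, e, a, h, hx, rfl⟩

lemma gluedTrace_le {A : Type*} [NonUnitalCStarAlgebra A] [PartialOrder A]
    {φ : A → A → ℝ≥0∞} {x : A} {c : ℝ≥0∞}
    (h : ∀ (ι : Type) [Fintype ι] (e a : ι → A), IsSubordinate e a → ∑ i, a i ≤ x →
      ∑ i, φ (e i) (a i) ≤ c) : gluedTrace φ x ≤ c :=
  sSup_le fun _ ⟨ι, _, e, a, hea, hx, hv⟩ ↦ hv ▸ h ι e a hea hx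

lemma smul_mem_closure_of_nonneg {I : TwoSidedIdeal A} {x : A} (hx : 0 ≤ x)
    (hxI : x ∈ closure (I : Set A)) (α : ℝ≥0) : (α : ℝ) • x ∈ closure (I : Set A) := by
  obtain ⟨n, hn⟩ := exists_nat_ge (α : ℝ)
  refine mem_closure_of_le (smul_nonneg α.coe_nonneg hx)
    (smul_le_smul_of_nonneg_right hn hx) ?_
  rw [Nat.cast_smul_eq_nsmul]
  exact map_mem_closure (f := fun y ↦ n • y) (by fun_prop) hxI fun y hy ↦ I.nsmul_mem n hy

variable {φ : A → A → ℝ≥0∞}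

/-- The glued trace extends each trace of a compatible family. -/
lemma gluedTrace_eq
    (htr : ∀ e : A, IsSelfAdjoint e → e * e = e → IsTrace (φ e) ∧ IsLSC (φ e))
    (hcomp : ∀ e₁ e₂ : A, IsSelfAdjoint e₁ → e₁ * e₁ = e₁ → IsSelfAdjoint e₂ → e₂ * e₂ = e₂ →
      ∀ x : A, 0 ≤ x → x ∈ closure (TwoSidedIdeal.span {e₁} : Set A) →
        x ∈ closure (TwoSidedIdeal.span {e₂} : Set A) → φ e₁ x = φ e₂ x)
    {e : A} (he : IsSelfAdjoint e) (hee : e * e = e) {x : A} (hx : 0 ≤ x)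
    (hxe : x ∈ closure (TwoSidedIdeal.span {e} : Set A)) : gluedTrace φ x = φ e x := by
  refine le_antisymm (gluedTrace_le fun ι _ p a hpa hax ↦ ?_) ?_
  · have htre := (htr e he hee).1
    calc ∑ i, φ (p i) (a i) = ∑ i, φ e (a i) := by
          refine Finset.sum_congr rfl fun i _ ↦ hcomp _ _ (hpa.isSelfAdjoint i) (hpa.mul_self i)
            he hee _ (hpa.nonneg i) (hpa.mem i) (mem_closure_of_le (hpa.nonneg i) ?_ hxe)
          exact (Finset.single_le_sum (fun j _ ↦ hpa.nonneg j) (Finset.mem_univ i)).trans hax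
      _ = φ e (∑ i, a i) := (htre.sum _ hpa.nonneg).symm
      _ ≤ φ e x := htre.mono_s7 (Finset.sum_nonneg fun i _ ↦ hpa.nonneg i) hax
  · simpa using IsSubordinate.sum_le_gluedTrace (φ := φ) (ι := Unit) (e := fun _ ↦ e)
      (a := fun _ ↦ x) ⟨fun _ ↦ he, fun _ ↦ hee, fun _ ↦ hx, fun _ ↦ hxe⟩ (x := x) (by simp)

lemma add_gluedTrace_le {x y : A} (hx : 0 ≤ x) (hy : 0 ≤ y) :
    gluedTrace φ x + gluedTrace φ y ≤ gluedTrace φ (x + y) := by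
  have hne : ∀ z : A, 0 ≤ z → {v | ∃ (ι : Type) (_ : Fintype ι) (e a : ι → A),
      IsSubordinate e a ∧ ∑ i, a i ≤ z ∧ v = ∑ i, φ (e i) (a i)}.Nonempty := fun z hz ↦
    ⟨0, Empty, inferInstance, Empty.elim, Empty.elim,
      ⟨fun i ↦ i.elim, fun i ↦ i.elim, fun i ↦ i.elim, fun i ↦ i.elim⟩, by simpa using hz,
      by simp⟩
  rw [gluedTrace, gluedTrace, sSup_eq_iSup, sSup_eq_iSup]
  refine ENNReal.biSup_add_biSup_le (hne x hx) (hne y hy) ?_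
  rintro _ ⟨ι, _, e, a, h, hax, rfl⟩ _ ⟨κ, _, p, b, hb, hby, rfl⟩
  have hsub : IsSubordinate (Sum.elim e p) (Sum.elim a b) :=
    ⟨Sum.rec h.isSelfAdjoint hb.isSelfAdjoint, Sum.rec h.mul_self hb.mul_self,
      Sum.rec h.nonneg hb.nonneg, Sum.rec h.mem hb.mem⟩
  have hle : ∑ i, Sum.elim a b i ≤ x + y := by
    simpa using add_le_add hax hby
  simpa using hsub.sum_le_gluedTrace (φ := φ) hle

lemma mul_gluedTrace_le
    (htr : ∀ e : A, IsSelfAdjoint e → e * e = e → IsTrace (φ e) ∧ IsLSC (φ e))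
    (x : A) (α : ℝ≥0) : α * gluedTrace φ x ≤ gluedTrace φ ((α : ℝ) • x) := by
  rw [gluedTrace, ENNReal.mul_sSup]
  refine iSup₂_le ?_
  rintro _ ⟨ι, _, e, a, hea, hax, rfl⟩
  have hsub : IsSubordinate e fun i ↦ (α : ℝ) • a i :=
    ⟨hea.isSelfAdjoint, hea.mul_self, fun i ↦ smul_nonneg α.coe_nonneg (hea.nonneg i),
      fun i ↦ smul_mem_closure_of_nonneg (hea.nonneg i) (hea.mem i) α⟩
  have hle : ∑ i, (α : ℝ) • a i ≤ (α : ℝ) • x := by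
    rw [← Finset.smul_sum]
    exact smul_le_smul_of_nonneg_left hax α.coe_nonneg
  refine le_of_eq_of_le ?_ (hsub.sum_le_gluedTrace hle)
  rw [Finset.mul_sum]
  exact Finset.sum_congr rfl fun i _ ↦
    ((htr _ (hea.isSelfAdjoint i) (hea.mul_self i)).1.smul _ (hea.nonneg i) α).symm

/-- The transport estimate behind additivity, traciality and semicontinuity of the glued trace. -/
lemma IsSubordinate.sum_transport_le
    (htr : ∀ e : A, IsSelfAdjoint e → e * e = e → IsTrace (φ e) ∧ IsLSC (φ e))
    {ι : Type} [Fintype ι] {e a : ι → A} (hea : IsSubordinate e a) {s r : A}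
    (has : ∑ i, a i ≤ s) (hr : IsSelfAdjoint r) (hrs : ‖r * s * r‖ ≤ 1) (y : A) :
    ∑ i, φ (e i) (CFC.sqrt (a i) * r * (star y * y) * r * CFC.sqrt (a i)) ≤
      gluedTrace φ (y * star y) := by
  have hu : ∀ i, star (CFC.sqrt (a i)) = CFC.sqrt (a i) := fun i ↦
    (IsSelfAdjoint.of_nonneg (CFC.sqrt_nonneg (a i))).star_eq
  have hs : 0 ≤ s := (Finset.sum_nonneg fun i _ ↦ hea.nonneg i).trans has
  have hsub : IsSubordinate e fun i ↦ y * r * a i * star (y * r) :=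
    ⟨hea.isSelfAdjoint, hea.mul_self, fun i ↦ star_right_conjugate_nonneg (hea.nonneg i) _,
      fun i ↦ map_mem_closure (f := fun b ↦ y * r * b * star (y * r)) (by fun_prop) (hea.mem i)
        fun b hb ↦ TwoSidedIdeal.mul_mem_right _ _ _ (TwoSidedIdeal.mul_mem_left _ _ _ hb)⟩
  have hle : ∑ i, y * r * a i * star (y * r) ≤ y * star y := by
    rw [← Finset.sum_mul, ← Finset.mul_sum]
    have hrsr : IsSelfAdjoint (r * s * r) := by
      simpa [hr.star_eq] using (IsSelfAdjoint.of_nonneg hs).conjugate r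
    calc y * r * (∑ i, a i) * star (y * r) ≤ y * r * s * star (y * r) :=
          star_right_conjugate_le_conjugate has _
      _ = y * (r * s * r) * star y := by rw [star_mul, hr.star_eq]; noncomm_ring
      _ ≤ ‖r * s * r‖ • (y * star y) := CStarAlgebra.star_right_conjugate_le_norm_smul hrsr
      _ ≤ (1 : ℝ) • (y * star y) :=
          smul_le_smul_of_nonneg_right hrs (mul_star_self_nonneg y)
      _ = y * star y := one_smul _ _
  refine le_of_eq_of_le (Finset.sum_congr rfl fun i _ ↦ ?_) (hsub.sum_le_gluedTrace hle)
  have h := (htr _ (hea.isSelfAdjoint i) (hea.mul_self i)).1.tracial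
    (y * r * CFC.sqrt (a i))
  convert h using 2
  · simp only [star_mul, hr.star_eq, hu]
    noncomm_ring
  · conv_lhs => rw [← CFC.sqrt_mul_sqrt_self (a i) (hea.nonneg i)]
    simp only [star_mul, hr.star_eq, hu]
    noncomm_ring

/-- To bound `∑ i, φ (e i) (a i)`, where `∑ i, a i ≤ s`, it suffices to bound the sums for the
compressions of `s` that approximate the `a i`. -/
lemma IsSubordinate.sum_le_of_forall_compress
    (htr : ∀ e : A, IsSelfAdjoint e → e * e = e → IsTrace (φ e) ∧ IsLSC (φ e))
    {ι : Type} [Fintype ι] {e a : ι → A} (hea : IsSubordinate e a) {s : A}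
    (has : ∑ i, a i ≤ s) {c : ℝ≥0∞}
    (h : ∀ r : A, IsSelfAdjoint r → ‖r * s * r‖ ≤ 1 →
      ∑ i, φ (e i) (CFC.sqrt (a i) * r * s * r * CFC.sqrt (a i)) ≤ c) :
    ∑ i, φ (e i) (a i) ≤ c := by
  have hs : 0 ≤ s := (Finset.sum_nonneg fun i _ ↦ hea.nonneg i).trans has
  obtain ⟨r, hr, hrs, hlim⟩ := exists_seq_tendsto_mul hs
  have hu : ∀ i, IsSelfAdjoint (CFC.sqrt (a i)) := fun i ↦ .of_nonneg (CFC.sqrt_nonneg (a i))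
  have huu : ∀ i, CFC.sqrt (a i) * CFC.sqrt (a i) = a i := fun i ↦
    CFC.sqrt_mul_sqrt_self (a i) (hea.nonneg i)
  refine IsLSC.sum_le_of_tendsto
    (fun i ↦ (htr _ (hea.isSelfAdjoint i) (hea.mul_self i)).2)
    (b := fun n i ↦ CFC.sqrt (a i) * r n * s * r n * CFC.sqrt (a i)) (fun n i ↦ ?_)
    (fun i ↦ ?_) fun n ↦ h _ (hr n) (hrs n)
  · have := star_right_conjugate_nonneg hs (CFC.sqrt (a i) * r n)
    rwa [star_mul, (hr n).star_eq, (hu i).star_eq, ← mul_assoc] at this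
  · have hai : a i ≤ s :=
      (Finset.single_le_sum (fun j _ ↦ hea.nonneg j) (Finset.mem_univ i)).trans has
    have := (hlim _ (hu i) ((huu i).le.trans hai)).mul_const (CFC.sqrt (a i))
    simpa only [huu, ← mul_assoc] using this

lemma gluedTrace_add_le
    (htr : ∀ e : A, IsSelfAdjoint e → e * e = e → IsTrace (φ e) ∧ IsLSC (φ e))
    {x y : A} (hx : 0 ≤ x) (hy : 0 ≤ y) :
    gluedTrace φ (x + y) ≤ gluedTrace φ x + gluedTrace φ y := by
  refine gluedTrace_le fun ι _ e a hea hax ↦ hea.sum_le_of_forall_compress htr hax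
    fun r hr hrs ↦ ?_
  have key : ∀ z, 0 ≤ z →
      (∀ i, 0 ≤ CFC.sqrt (a i) * r * z * r * CFC.sqrt (a i)) ∧
      ∑ i, φ (e i) (CFC.sqrt (a i) * r * z * r * CFC.sqrt (a i)) ≤ gluedTrace φ z := by
    intro z hz
    constructor
    · intro i
      have := star_right_conjugate_nonneg hz (CFC.sqrt (a i) * r)
      rwa [star_mul, hr.star_eq, (IsSelfAdjoint.of_nonneg (CFC.sqrt_nonneg (a i))).star_eq,
        ← mul_assoc] at this
    · have := hea.sum_transport_le htr hax hr hrs (CFC.sqrt z)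
      rwa [(IsSelfAdjoint.of_nonneg (CFC.sqrt_nonneg z)).star_eq,
        CFC.sqrt_mul_sqrt_self z hz] at this
  refine le_of_eq_of_le ?_ (add_le_add (key x hx).2 (key y hy).2)
  rw [← Finset.sum_add_distrib]
  refine Finset.sum_congr rfl fun i _ ↦ ?_
  rw [← (htr _ (hea.isSelfAdjoint i) (hea.mul_self i)).1.add _ _ ((key x hx).1 i)
    ((key y hy).1 i)]
  congr 1
  noncomm_ring

lemma gluedTrace_star_mul_self_le
    (htr : ∀ e : A, IsSelfAdjoint e → e * e = e → IsTrace (φ e) ∧ IsLSC (φ e)) (x : A) :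
    gluedTrace φ (star x * x) ≤ gluedTrace φ (x * star x) :=
  gluedTrace_le fun _ _ _ _ hea hax ↦ hea.sum_le_of_forall_compress htr hax
    fun _ hr hrs ↦ hea.sum_transport_le htr hax hr hrs x

lemma isLSC_gluedTrace
    (htr : ∀ e : A, IsSelfAdjoint e → e * e = e → IsTrace (φ e) ∧ IsLSC (φ e)) :
    IsLSC (gluedTrace φ) := by
  refine fun α ↦ isClosed_of_closure_subset fun x hx ↦ ?_
  obtain ⟨y, hy, hlim⟩ := mem_closure_iff_seq_limit.1 hx
  refine ⟨ge_of_tendsto' hlim fun n ↦ (hy n).1, gluedTrace_le fun ι _ e a hea hax ↦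
    hea.sum_le_of_forall_compress htr hax fun r hr hrs ↦ ?_⟩
  refine IsLSC.sum_le_of_tendsto
    (fun i ↦ (htr _ (hea.isSelfAdjoint i) (hea.mul_self i)).2)
    (b := fun n i ↦ CFC.sqrt (a i) * r * y n * r * CFC.sqrt (a i)) (fun n i ↦ ?_)
    (fun i ↦ ?_) fun n ↦ ?_
  · have := star_right_conjugate_nonneg (hy n).1 (CFC.sqrt (a i) * r)
    rwa [star_mul, hr.star_eq, (IsSelfAdjoint.of_nonneg (CFC.sqrt_nonneg (a i))).star_eq,
      ← mul_assoc] at this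
  · exact ((hlim.const_mul _).mul_const _).mul_const _
  · have := hea.sum_transport_le htr hax hr hrs (CFC.sqrt (y n))
    rw [(IsSelfAdjoint.of_nonneg (CFC.sqrt_nonneg (y n))).star_eq,
      CFC.sqrt_mul_sqrt_self (y n) (hy n).1] at this
    exact this.trans (hy n).2

lemma isTrace_gluedTrace
    (htr : ∀ e : A, IsSelfAdjoint e → e * e = e → IsTrace (φ e) ∧ IsLSC (φ e))
    (h0 : gluedTrace φ 0 = 0) : IsTrace (gluedTrace φ) where
  smul x _ α := by
    refine le_antisymm ?_ (mul_gluedTrace_le htr x α)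
    rcases eq_or_ne α 0 with rfl | hα
    · simp [h0]
    have h := mul_gluedTrace_le htr ((α : ℝ) • x) α⁻¹
    rw [smul_smul, ← NNReal.coe_mul, inv_mul_cancel₀ hα, NNReal.coe_one, one_smul] at h
    calc gluedTrace φ ((α : ℝ) • x)
        = α * ((α⁻¹ : ℝ≥0) * gluedTrace φ ((α : ℝ) • x)) := by
          rw [← mul_assoc, ← ENNReal.coe_mul, mul_inv_cancel₀ hα, ENNReal.coe_one, one_mul]
      _ ≤ α * gluedTrace φ x := by gcongr
  add x y hx hy := le_antisymm (gluedTrace_add_le htr hx hy) (add_gluedTrace_le hx hy)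
  tracial x := le_antisymm (gluedTrace_star_mul_self_le htr x)
    (by simpa using gluedTrace_star_mul_self_le htr (star x))

end Glueing

/-- Let `A` be a C*-algebra with the ideal property. Suppose that for every projection
`e ∈ A` there is a lower semicontinuous trace `φ e` on `A` such that for any two
projections `e₁, e₂` one has `φ e₁ x = φ e₂ x` for all positive `x ∈ (Ae₁A) ∩ (Ae₂A)`.
Then there exists a lower semicontinuous trace `ψ` on `A` with `ψ x = φ e x` for every
projection `e` and every positive `x ∈ AeA`. -/
theorem exists_trace_glueing {A : Type*} [NonUnitalCStarAlgebra A] [PartialOrder A]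
    [StarOrderedRing A] (hA : IdealProperty A)
    (φ : A → A → ℝ≥0∞)
    (htr : ∀ e : A, IsSelfAdjoint e → e * e = e → IsTrace (φ e) ∧ IsLSC (φ e))
    (hcomp : ∀ e₁ e₂ : A, IsSelfAdjoint e₁ → e₁ * e₁ = e₁ → IsSelfAdjoint e₂ → e₂ * e₂ = e₂ →
      ∀ x : A, 0 ≤ x → x ∈ closure (TwoSidedIdeal.span {e₁} : Set A) →
        x ∈ closure (TwoSidedIdeal.span {e₂} : Set A) → φ e₁ x = φ e₂ x) :
    ∃ ψ : A → ℝ≥0∞, IsTrace ψ ∧ IsLSC ψ ∧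
      ∀ e : A, IsSelfAdjoint e → e * e = e →
        ∀ x : A, 0 ≤ x → x ∈ closure (TwoSidedIdeal.span {e} : Set A) → ψ x = φ e x := by
  have hglue := fun e he hee x hx hxe ↦ gluedTrace_eq htr hcomp (e := e) he hee (x := x) hx hxe
  have h0 : gluedTrace φ 0 = 0 := by
    rw [hglue 0 (.zero A) (mul_zero 0) 0 le_rfl (subset_closure (TwoSidedIdeal.zero_mem _))]
    exact (htr 0 (.zero A) (mul_zero 0)).1.zero
  exact ⟨gluedTrace φ, isTrace_gluedTrace htr h0, isLSC_gluedTrace htr, hglue⟩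
end
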